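/- Let m < F be positive integers with m not dividing F and let S ∈ 𝓡(F,m). Then X = {x ∈ msg(S) : x ∉ Δ(F,m)} is an 𝓡(F,m)-set with 𝓡(F,m)[X] = S, and X is the unique minimal 𝓡(F,m)-system of generators of S; that is, for every 𝓡(F,m)-set Y with 𝓡(F,m)[Y] = S one has X ⊆ Y. -/

import Mathlib

/-!
Membership in `RFm F m` amounts to elementary conditions (`mem_RFm_iff`), from which `Delta F m` is
the least element of `RFm F m`.

Any semigroup `T` in the family which contains the minimal generators of `S` outside `Delta F m`
contains `S`: by strong induction, an element of `S` is in `Delta F m`, or a minimal generator, or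
a sum of two smaller elements of `S`. Conversely, removing from `S` a minimal generator outside
`Delta F m` leaves a semigroup in the family (`diff_singleton_mem_RFm`). If `Y` generates `S` but
misses such a generator `x`, then `S \ {x}` contains `Y`, hence contains `S`, which is absurd.
-/

/-- A numerical semigroup: a submonoid of (ℕ,+) with finite complement. -/
def IsNumericalSemigroup (S : Set ℕ) : Prop :=
  0 ∈ S ∧ (∀ a ∈ S, ∀ b ∈ S, a + b ∈ S) ∧ Sᶜ.Finite

/-- The multiplicity m(S): least positive element of S. -/
noncomputable def mult (S : Set ℕ) : ℕ := sInf {s | s ∈ S ∧ s ≠ 0}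

/-- The ratio r(S): least s ∈ S not divisible by the multiplicity. -/
noncomputable def ratio (S : Set ℕ) : ℕ := sInf {s | s ∈ S ∧ ¬ mult S ∣ s}

/-- The Frobenius number F(S): largest integer not in S. -/
noncomputable def frob (S : Set ℕ) : ℕ := sSup Sᶜ

/-- The genus g(S): number of gaps of S. -/
noncomputable def genus (S : Set ℕ) : ℕ := Sᶜ.ncard

/-- Pseudo-Frobenius numbers of S. -/
def PF (S : Set ℕ) : Set ℕ := {x | x ∉ S ∧ ∀ s ∈ S, s ≠ 0 → x + s ∈ S}

/-- Special gaps of S. -/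
def SG (S : Set ℕ) : Set ℕ := {x | x ∈ PF S ∧ 2 * x ∈ S}

/-- The Apéry set of n in S: elements s of S with s - n ∉ S (as integers). -/
def Ap (S : Set ℕ) (n : ℕ) : Set ℕ := {s | s ∈ S ∧ ¬ ∃ t ∈ S, t + n = s}

/-- The minimal system of generators of a numerical semigroup:
    nonzero elements not expressible as a sum of two nonzero elements. -/
def msg (S : Set ℕ) : Set ℕ :=
  {x | x ∈ S ∧ x ≠ 0 ∧ ∀ a ∈ S, ∀ b ∈ S, a ≠ 0 → b ≠ 0 → x ≠ a + b}

/-- The embedding dimension e(S). -/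
noncomputable def edim (S : Set ℕ) : ℕ := (msg S).ncard

/-- The submonoid of ℕ generated by a set A. -/
def closureSet (A : Set ℕ) : Set ℕ := (AddSubmonoid.closure A : Set ℕ)

/-- M is the minimum of the family R with respect to inclusion. -/
def IsMinOf (R : Set (Set ℕ)) (M : Set ℕ) : Prop := M ∈ R ∧ ∀ S ∈ R, M ⊆ S

/-- A ratio-covariety. -/
def IsRatioCovariety (R : Set (Set ℕ)) : Prop :=
  R.Nonempty ∧ (∀ S ∈ R, IsNumericalSemigroup S) ∧
  (∃ M, IsMinOf R M) ∧
  (∀ S ∈ R, ∀ T ∈ R, S ∩ T ∈ R) ∧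
  (∀ S ∈ R, ∀ M, IsMinOf R M → S ≠ M → S \ {ratio S} ∈ R)

/-- The family 𝓡(F,m) of numerical semigroups with Frobenius number F and multiplicity m. -/
def RFm (F m : ℕ) : Set (Set ℕ) :=
  {S | IsNumericalSemigroup S ∧ frob S = F ∧ mult S = m}

/-- Δ(F,m) = ⟨m⟩ ∪ {F+1, →}. -/
def Delta (F m : ℕ) : Set ℕ := {n | m ∣ n} ∪ {n | F < n}

/-- X is an 𝓡-set: disjoint from min(𝓡) and contained in some element of 𝓡. -/
def IsRSet (R : Set (Set ℕ)) (X : Set ℕ) : Prop :=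
  (∀ M, IsMinOf R M → X ∩ M = ∅) ∧ ∃ S ∈ R, X ⊆ S

/-- 𝓡[X]: the intersection of all elements of 𝓡 containing X. -/
def RGen (R : Set (Set ℕ)) (X : Set ℕ) : Set ℕ := ⋂₀ {S | S ∈ R ∧ X ⊆ S}

/-- The 𝓡-rank of S. -/
noncomputable def Rrank (R : Set (Set ℕ)) (S : Set ℕ) : ℕ :=
  sInf {n | ∃ X, IsRSet R X ∧ RGen R X = S ∧ X.ncard = n}

/-- The values of `frob` and `mult` spelled out without `sSup` and `sInf`; positivity of `m` and `F`
excludes the default value `0` of these operators. -/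
theorem mem_RFm_iff {F m : ℕ} (hm : 0 < m) (hF : 0 < F) (S : Set ℕ) :
    S ∈ RFm F m ↔ (0 ∈ S ∧ (∀ a ∈ S, ∀ b ∈ S, a + b ∈ S)) ∧ (F ∉ S ∧ ∀ n, F < n → n ∈ S) ∧
      m ∈ S ∧ ∀ s ∈ S, s ≠ 0 → m ≤ s := by
  constructor
  · rintro ⟨⟨h0, hadd, hfin⟩, hfr, hmu⟩
    have hne : Sᶜ.Nonempty := by
      by_contra hc
      rw [Set.not_nonempty_iff_eq_empty] at hc
      simp [frob, hc] at hfr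
      omega
    have hne' : {s | s ∈ S ∧ s ≠ 0}.Nonempty := by
      by_contra hc
      rw [Set.not_nonempty_iff_eq_empty] at hc
      simp only [mult, hc, Nat.sInf_empty] at hmu
      omega
    have hFm : sSup Sᶜ ∈ Sᶜ := Nat.sSup_mem hne hfin.bddAbove
    have hmm : sInf {s | s ∈ S ∧ s ≠ 0} ∈ {s | s ∈ S ∧ s ≠ 0} := Nat.sInf_mem hne'
    unfold frob at hfr
    unfold mult at hmu
    rw [hfr] at hFm
    rw [hmu] at hmm
    refine ⟨⟨h0, hadd⟩, ⟨hFm, fun n hn => ?_⟩, hmm.1, fun s hs hs0 => ?_⟩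
    · by_contra hc
      have := le_csSup hfin.bddAbove (show n ∈ Sᶜ from hc)
      omega
    · rw [← hmu]
      exact Nat.sInf_le ⟨hs, hs0⟩
  · rintro ⟨⟨h0, hadd⟩, ⟨hFS, hgt⟩, hmS, hle⟩
    have hub : ∀ n ∈ Sᶜ, n ≤ F := fun n hn => by
      by_contra hc
      exact hn (hgt n (by omega))
    refine ⟨⟨h0, hadd, (Set.finite_Iic F).subset hub⟩, ?_, ?_⟩
    · exact IsGreatest.csSup_eq ⟨hFS, hub⟩
    · exact IsLeast.csInf_eq ⟨⟨hmS, by omega⟩, fun s hs => hle s hs.1 hs.2⟩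

theorem Delta_subset {F m : ℕ} (hm : 0 < m) (hF : 0 < F) {S : Set ℕ} (hS : S ∈ RFm F m) :
    Delta F m ⊆ S := by
  obtain ⟨⟨h0, hadd⟩, ⟨-, hgt⟩, hmS, -⟩ := (mem_RFm_iff hm hF S).1 hS
  rintro n (⟨k, rfl⟩ | hn)
  · induction k with
    | zero => simpa using h0
    | succ k ih => exact hadd _ ih _ hmS
  · exact hgt n hn

theorem Delta_mem_RFm {F m : ℕ} (hm : 0 < m) (hmF : m < F) (hdvd : ¬ m ∣ F) :
    Delta F m ∈ RFm F m := by
  rw [mem_RFm_iff hm (by omega)]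
  refine ⟨⟨Or.inl (dvd_zero m), ?_⟩, ⟨?_, fun n hn => Or.inr hn⟩, Or.inl dvd_rfl, ?_⟩
  · rintro a (ha | ha) b (hb | hb)
    · exact Or.inl (dvd_add ha hb)
    all_goals
      right
      simp only [Set.mem_ofPred_eq] at *
      omega
  · rintro (h | h)
    · exact hdvd h
    · exact lt_irrefl F h
  · rintro s (h | h) hs
    · exact Nat.le_of_dvd (by omega) h
    · exact (hmF.trans h).le

/-- Since `x` is not a sum of two nonzero elements, `S \ {x}` is closed under addition; since
`x ∉ Delta F m`, the elements `0`, `m` and everything above `F` survive. -/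
theorem diff_singleton_mem_RFm {F m : ℕ} (hm : 0 < m) (hF : 0 < F) {S : Set ℕ}
    (hS : S ∈ RFm F m) {x : ℕ} (hx : x ∈ msg S) (hxD : x ∉ Delta F m) :
    S \ {x} ∈ RFm F m := by
  obtain ⟨⟨h0, hadd⟩, ⟨hFS, hgt⟩, hmS, hle⟩ := (mem_RFm_iff hm hF S).1 hS
  obtain ⟨-, hx0, hirr⟩ := hx
  rw [mem_RFm_iff hm hF]
  refine ⟨⟨⟨h0, fun h => hx0 h.symm⟩, ?_⟩, ⟨fun h => hFS h.1, fun n hn => ⟨hgt n hn, ?_⟩⟩,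
    ⟨hmS, ?_⟩, fun s hs => hle s hs.1⟩
  · rintro a ⟨ha, hax⟩ b ⟨hb, hbx⟩
    refine ⟨hadd a ha b hb, fun h => ?_⟩
    simp only [Set.mem_singleton_iff] at h hax hbx
    exact hirr a ha b hb (by omega) (by omega) h.symm
  · rintro rfl
    exact hxD (Or.inr hn)
  · rintro rfl
    exact hxD (Or.inl dvd_rfl)

theorem unique_minimal_RFm_system (m F : ℕ) (hm : 0 < m) (hmF : m < F) (hdvd : ¬ m ∣ F)
    (S : Set ℕ) (hS : S ∈ RFm F m) :
    IsRSet (RFm F m) {x | x ∈ msg S ∧ x ∉ Delta F m} ∧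
    RGen (RFm F m) {x | x ∈ msg S ∧ x ∉ Delta F m} = S ∧
    ∀ Y, IsRSet (RFm F m) Y → RGen (RFm F m) Y = S →
      {x | x ∈ msg S ∧ x ∉ Delta F m} ⊆ Y := by
  have hF : 0 < F := by omega
  have hXS : {x | x ∈ msg S ∧ x ∉ Delta F m} ⊆ S := fun x hx => hx.1.1
  refine ⟨⟨fun M hM => ?_, S, hS, hXS⟩, ?_, fun Y _ hYS x hx => ?_⟩
  · ext x
    simp only [Set.mem_inter_iff, Set.mem_empty_iff_false, iff_false]
    rintro ⟨hx, hxM⟩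
    exact hx.2 (hM.2 _ (Delta_mem_RFm hm hmF hdvd) hxM)
  · refine Set.Subset.antisymm (Set.sInter_subset_of_mem ⟨hS, hXS⟩) ?_
    refine Set.subset_sInter ?_
    rintro T ⟨hT, hXT⟩ x
    induction x using Nat.strong_induction_on with
    | _ x ih =>
      intro hxS
      by_cases hxD : x ∈ Delta F m
      · exact Delta_subset hm hF hT hxD
      by_cases hxm : x ∈ msg S
      · exact hXT ⟨hxm, hxD⟩
      have hx0 : x ≠ 0 := by
        rintro rfl
        exact hxD (Or.inl (dvd_zero m))
      obtain ⟨a, ha, b, hb, ha0, hb0, rfl⟩ :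
          ∃ a ∈ S, ∃ b ∈ S, a ≠ 0 ∧ b ≠ 0 ∧ x = a + b := by
        by_contra! hc
        exact hxm ⟨hxS, hx0, hc⟩
      exact hT.1.2.1 a (ih a (by omega) ha) b (ih b (by omega) hb)
  · by_contra hxY
    have hYsub : Y ⊆ S := hYS ▸ Set.subset_sInter fun T hT => hT.2
    have hST : S ⊆ S \ {x} := by
      conv_lhs => rw [← hYS]
      refine Set.sInter_subset_of_mem ⟨diff_singleton_mem_RFm hm hF hS hx.1 hx.2, ?_⟩
      exact fun y hy => ⟨hYsub hy, fun h => hxY (h ▸ hy)⟩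
    exact (hST hx.1.1).2 rfl
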